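/- Let α ∈ (0,1] and let A ⊆ F_2^n satisfy |A| ≥ α·2^n. Then for every real ε > 0, every positive integer t, and every nonempty set B ⊆ F_2^n there exists a linear subspace V of F_2^n with codimension codim(V) = n − dim(V) ≤ 32·log(2/α^t) such that: for every v ∈ V, every nonempty subset S ⊆ F_2^n, every real η > 0, and every positive integer ℓ, Pr_{y∈S}[ ρ_{A→B}(y) − ρ_{A→B}(y + v) ≤ 4εℓ·√(ρ_{A→B}(y)) + 2η + 2^{−ℓ}·√(|B|/|A|) ] ≥ 1 − 16·(ℓ/η)·(|A+B|/|S|)·exp(−ε²t/4). -/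

import Mathlib

open scoped Classical Pointwise

/-- The measure of additive containment: `ρ_{A→B}(y) = |{a ∈ A : y + a ∈ B}| / |A|`. -/
noncomputable def rhoMeas {n : ℕ} (A B : Finset (Fin n → ZMod 2)) (y : Fin n → ZMod 2) : ℝ :=
  ((A.filter fun a => y + a ∈ B).card : ℝ) / A.card

/-- `Pr_{y ∈ S}[P y] = |{y ∈ S : P y}| / |S|`. -/
noncomputable def prOver {n : ℕ} (S : Finset (Fin n → ZMod 2))
    (P : (Fin n → ZMod 2) → Prop) : ℝ :=
  ((S.filter fun y => P y).card : ℝ) / S.card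

/-!
Sample `a ∈ A ^ t` uniformly. A Chernoff bound at scale `ε √ρ` shows that for at least half of the
samples the empirical measure of containment agrees with `ρ = ρ_{A→B}` outside a small subset of
`B - A`. By pigeonhole over diagonal translates, the good samples contain `b + (x, …, x)` for all
`x` in a set `X` of density at least `α ^ t / 2`; comparing the samples for `x` and `x'`, both of
which translate the empirical measure of `b`, shows that `ρ` rarely drops by more than `2 ε √ρ`
under the shift by `x - x'`.

Now average `ρ` over sums of `ℓ` differences of elements of `X`. Passing to this average and back
costs `4 ε ℓ √ρ + 2 η` outside a small set, by Markov's inequality. In the Fourier expansion of the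
average each coefficient is damped by the `2 ℓ`-th power of the bias of `X`. If all frequencies of
bias at least `1 / 2` vanish at `v`, the shift by `v` changes only the damped terms, of total size
at most `2 ^ (-ℓ) √(|B| / |A|)` by Cauchy–Schwarz and Parseval. Chang's theorem bounds the dimension
spanned by the frequencies of large bias, which is the codimension of the space of such `v`.
-/

open Finset Real
open scoped BigOperators

section ApproxLE

/-- `s'` falls short of `s` by at most `c √s`. This is the error scale at which sampling resolves
a probability `s`. -/
def ApproxLE (c s s' : ℝ) : Prop := s - c * √s ≤ s'

lemma ApproxLE.sub_sub_le {b d s m s' : ℝ} (hb : 0 ≤ b) (hd : 0 ≤ d) (hs : 0 ≤ s) (hs' : 0 ≤ s')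
    (hsm : s - d ≤ m) (h : ApproxLE b m s') : s - d - b * √s ≤ s' := by
  unfold ApproxLE at h
  have hsq := mul_self_sqrt hs
  rcases le_total m s with hms | hms
  · have := mul_le_mul_of_nonneg_left (sqrt_le_sqrt hms) hb
    linarith
  · have hmono := sqrt_le_sqrt hms
    have hmq := mul_self_sqrt (hs.trans hms)
    rcases le_total b √s with hbs | hbs
    -- `x ↦ x - b √x` is monotone where `b ≤ √x`, and at most `0` where `√x ≤ b`.
    · nlinarith [mul_nonneg (sub_nonneg.2 hmono) (sub_nonneg.2 hbs), sqrt_nonneg s]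
    · nlinarith [mul_nonneg (sub_nonneg.2 hbs) (sqrt_nonneg s)]

lemma ApproxLE.trans {a b s m s' : ℝ} (ha : 0 ≤ a) (hb : 0 ≤ b) (hs : 0 ≤ s) (hs' : 0 ≤ s')
    (h : ApproxLE a s m) (h' : ApproxLE b m s') : ApproxLE (a + b) s s' := by
  have := ApproxLE.sub_sub_le hb (mul_nonneg ha (sqrt_nonneg s)) hs hs' h h'
  unfold ApproxLE
  linarith

end ApproxLE

section Freq

variable {ι κ : Type*}

/-- The proportion of the elements of `s` that satisfy `P`, with value `0` when `s` is empty. It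
extends `prOver` to arbitrary types. -/
noncomputable def freq (s : Finset ι) (P : ι → Prop) [DecidablePred P] : ℝ :=
  (#{i ∈ s | P i} : ℝ) / #s

lemma freq_nonneg (s : Finset ι) (P : ι → Prop) [DecidablePred P] : 0 ≤ freq s P := by
  unfold freq; positivity

lemma freq_le_one (s : Finset ι) (P : ι → Prop) [DecidablePred P] : freq s P ≤ 1 :=
  div_le_one_of_le₀ (mod_cast card_filter_le s P) (Nat.cast_nonneg _)

lemma freq_eq_zero {s : Finset ι} {P : ι → Prop} [DecidablePred P] (h : ∀ i ∈ s, ¬ P i) :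
    freq s P = 0 := by
  rw [freq, filter_false_of_mem h, card_empty, Nat.cast_zero, zero_div]

lemma card_mul_freq (s : Finset ι) (P : ι → Prop) [DecidablePred P] :
    #s * freq s P = #{i ∈ s | P i} := by
  rcases s.eq_empty_or_nonempty with rfl | hs
  · simp
  · exact mul_div_cancel₀ _ (mod_cast hs.card_ne_zero)

lemma freq_mono {s : Finset ι} {P Q : ι → Prop} [DecidablePred P] [DecidablePred Q]
    (h : ∀ i ∈ s, P i → Q i) : freq s P ≤ freq s Q := by
  unfold freq
  gcongr ((#?_ : ℕ) : ℝ) / _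
  intro i hi
  rw [mem_filter] at hi ⊢
  exact ⟨hi.1, h i hi.1 hi.2⟩

lemma freq_or_le (s : Finset ι) (P Q : ι → Prop) [DecidablePred P] [DecidablePred Q] :
    freq s (fun i => P i ∨ Q i) ≤ freq s P + freq s Q := by
  rw [freq, freq, freq, ← add_div, filter_or]
  gcongr
  exact_mod_cast card_union_le _ _

lemma freq_eq_expect (s : Finset ι) (P : ι → Prop) [DecidablePred P] :
    freq s P = 𝔼 i ∈ s, if P i then 1 else 0 := by
  rw [expect_eq_sum_div_card, sum_boole, freq]

lemma card_filter_lt_freq_mul_le {s : Finset ι} (hs : s.Nonempty) (t : Finset κ)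
    (P : ι → κ → Prop) [∀ i k, Decidable (P i k)] {M : ℝ} (η : ℝ)
    (h : ∀ i ∈ s, (#{k ∈ t | P i k} : ℝ) ≤ M) :
    #{k ∈ t | η < freq s fun i => P i k} * η ≤ M :=
  calc
    #{k ∈ t | η < freq s fun i => P i k} * η
        ≤ ∑ k ∈ t with η < freq s fun i => P i k, freq s fun i => P i k := by
      rw [← nsmul_eq_mul]
      exact card_nsmul_le_sum _ _ _ fun k hk => (mem_filter.1 hk).2.le
    _ ≤ ∑ k ∈ t, freq s fun i => P i k :=
      sum_le_sum_of_subset_of_nonneg (filter_subset _ _) fun _ _ _ => freq_nonneg _ _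
    _ = 𝔼 i ∈ s, (#{k ∈ t | P i k} : ℝ) := by
      simp only [freq_eq_expect, ← expect_sum_comm, sum_boole]
    _ ≤ M := expect_le hs h

lemma expect_sqrt_le_sqrt_expect (s : Finset ι) {f : ι → ℝ} (hf : ∀ i ∈ s, 0 ≤ f i) :
    𝔼 i ∈ s, √(f i) ≤ √(𝔼 i ∈ s, f i) := by
  rcases s.eq_empty_or_nonempty with rfl | hs
  · simp
  have h := expect_mul_sq_le_sq_mul_sq s (fun i => √(f i)) fun _ => 1
  simp only [mul_one, one_pow, expect_const hs] at h
  rw [expect_congr rfl fun i hi => sq_sqrt (hf i hi)] at h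
  exact le_sqrt_of_sq_le h

lemma sub_freq_le_expect {s : Finset ι} (hs : s.Nonempty) {f : ι → ℝ} {x : ℝ}
    (hf : ∀ i ∈ s, 0 ≤ f i) (hx : x ≤ 1) : x - freq s (fun i => ¬ x ≤ f i) ≤ 𝔼 i ∈ s, f i := by
  calc
    x - freq s (fun i => ¬ x ≤ f i) = 𝔼 i ∈ s, (x - if ¬ x ≤ f i then 1 else 0) := by
      rw [expect_sub_distrib, expect_const hs, freq_eq_expect]
    _ ≤ 𝔼 i ∈ s, f i := expect_le_expect fun i hi => by
      have := hf i hi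
      split_ifs <;> linarith

lemma approxLE_expect {s : Finset ι} (hs : s.Nonempty) {g : ι → ℝ} {c x : ℝ}
    (hg0 : ∀ i ∈ s, 0 ≤ g i) (hg1 : ∀ i ∈ s, g i ≤ 1) (hc : 0 ≤ c) (hx : 0 ≤ x) :
    ApproxLE c (𝔼 i ∈ s, g i) (x + freq s fun i => ¬ ApproxLE c (g i) x) := by
  have hpt : ∀ i ∈ s, g i - c * √(g i) - (if ¬ ApproxLE c (g i) x then 1 else 0) ≤ x := by
    intro i hi
    have := hg1 i hi
    have := mul_nonneg hc (sqrt_nonneg (g i))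
    unfold ApproxLE
    split_ifs <;> linarith
  have havg := expect_le hs hpt
  rw [expect_sub_distrib, expect_sub_distrib, ← mul_expect, ← freq_eq_expect] at havg
  have := mul_le_mul_of_nonneg_left (expect_sqrt_le_sqrt_expect s hg0) hc
  change _ - _ ≤ _
  linarith

lemma sub_le_of_expect_sub_expect_le {s : Finset ι} (hs : s.Nonempty) {f g : ι → ℝ}
    {x y c η τ : ℝ} (hf : ∀ i ∈ s, 0 ≤ f i) (hg0 : ∀ i ∈ s, 0 ≤ g i) (hg1 : ∀ i ∈ s, g i ≤ 1)
    (hx0 : 0 ≤ x) (hx1 : x ≤ 1) (hy : 0 ≤ y) (hc : 0 ≤ c) (hτ : 0 ≤ τ)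
    (hxf : freq s (fun i => ¬ ApproxLE c x (f i)) ≤ η)
    (hgy : freq s (fun i => ¬ ApproxLE c (g i) y) ≤ η)
    (hfg : 𝔼 i ∈ s, f i - 𝔼 i ∈ s, g i ≤ τ) :
    x - y ≤ 2 * c * √x + 2 * η + τ := by
  have hη : 0 ≤ η := (freq_nonneg _ _).trans hxf
  have hcx : 0 ≤ c * √x := mul_nonneg hc (sqrt_nonneg x)
  have hf' : x - c * √x - η ≤ 𝔼 i ∈ s, f i :=
    (sub_le_sub_left hxf _).trans (sub_freq_le_expect hs hf (by linarith))
  have hgy' : ApproxLE c (𝔼 i ∈ s, g i) (y + η) :=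
    le_trans (approxLE_expect hs hg0 hg1 hc hy) (add_le_add_right hgy y)
  have := hgy'.sub_sub_le hc (d := c * √x + η + τ) (by positivity) hx0 (by positivity)
    (by linarith)
  linarith

end Freq

section Chernoff

lemma exp_mul_one_sub_le {x : ℝ} (h0 : 0 ≤ x) (h1 : x ≤ 1) : exp x * (1 - x) ≤ 1 - x ^ 2 / 2 := by
  have h : exp x ≤ 1 + x + x ^ 2 / 2 + x ^ 3 * (2 / 9) := by
    have := exp_bound' h0 h1 (n := 3) (by norm_num)
    norm_num [sum_range_succ, Nat.factorial] at this
    linarith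
  have := mul_le_mul_of_nonneg_right h (sub_nonneg.2 h1)
  nlinarith [pow_nonneg h0 3, pow_nonneg h0 4]

lemma exp_neg_le_one_sub_add {x : ℝ} (h0 : 0 ≤ x) : exp (-x) ≤ 1 - x + x ^ 2 / 2 := by
  have hpos : 0 < 1 + x + x ^ 2 / 2 := by positivity
  calc
    exp (-x) = (exp x)⁻¹ := exp_neg x
    _ ≤ (1 + x + x ^ 2 / 2)⁻¹ := inv_anti₀ hpos (quadratic_le_exp_of_nonneg h0)
    _ ≤ 1 - x + x ^ 2 / 2 := by
      rw [inv_le_iff_one_le_mul₀ hpos]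
      nlinarith [pow_nonneg h0 4]

variable {ι α : Type*} [Fintype ι] [DecidableEq ι]

lemma sum_exp_mul_card_le (A : Finset α) (P : α → Prop) [DecidablePred P] (l : ℝ) :
    ∑ a ∈ Fintype.piFinset (fun _ : ι => A), exp (l * #{i | P (a i)}) ≤
      (#A : ℝ) ^ Fintype.card ι * exp (Fintype.card ι * (freq A P * (exp l - 1))) := by
  have hfactor (a : ι → α) : exp (l * #{i | P (a i)}) = ∏ i, if P (a i) then exp l else 1 := by
    rw [prod_ite, prod_const, prod_const_one, mul_one, mul_comm, exp_nat_mul]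
  have hsum : ∑ x ∈ A, (if P x then exp l else 1) = #A * (1 + freq A P * (exp l - 1)) := by
    have hpt (x : α) : (if P x then exp l else 1) = 1 + (if P x then 1 else 0) * (exp l - 1) := by
      split_ifs <;> ring
    simp only [hpt, sum_add_distrib, ← sum_mul, sum_boole, sum_const, nsmul_eq_mul,
      ← card_mul_freq]
    ring
  have hnonneg : 0 ≤ 1 + freq A P * (exp l - 1) := by
    nlinarith [freq_le_one A P, mul_nonneg (freq_nonneg A P) (exp_pos l).le]
  simp only [hfactor]
  rw [← prod_univ_sum (fun _ : ι => A) (fun _ x => if P x then exp l else 1), prod_const, hsum,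
    card_univ, mul_pow, exp_nat_mul]
  gcongr
  linarith [add_one_le_exp (freq A P * (exp l - 1))]

lemma freq_chernoff (A : Finset α) (P : α → Prop) [DecidablePred P] (l θ : ℝ) :
    freq (Fintype.piFinset fun _ : ι => A) (fun a => θ ≤ l * freq univ fun i => P (a i)) ≤
      exp (Fintype.card ι * (freq A P * (exp l - 1) - θ)) := by
  set t := Fintype.card ι
  have hpt (a : ι → α) : (if θ ≤ l * freq univ fun i => P (a i) then (1 : ℝ) else 0) ≤
      exp (l * #{i | P (a i)}) * exp (-(t * θ)) := by
    rw [← exp_add, ← card_mul_freq, card_univ]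
    split_ifs with h
    · have := mul_le_mul_of_nonneg_left h t.cast_nonneg (α := ℝ)
      exact one_le_exp (by linarith)
    · positivity
  rw [freq, ← sum_boole]
  refine div_le_of_le_mul₀ (Nat.cast_nonneg _) (exp_pos _).le ?_
  calc
    _ ≤ ∑ a ∈ Fintype.piFinset fun _ : ι => A, exp (l * #{i | P (a i)}) * exp (-(t * θ)) :=
      sum_le_sum fun a _ => hpt a
    _ ≤ (#A : ℝ) ^ t * exp (t * (freq A P * (exp l - 1))) * exp (-(t * θ)) := by
      rw [← sum_mul]
      gcongr
      exact sum_exp_mul_card_le A P l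
    _ = exp (t * (freq A P * (exp l - 1) - θ)) * #(Fintype.piFinset fun _ : ι => A) := by
      rw [Fintype.card_piFinset, prod_const, card_univ, Nat.cast_pow, mul_assoc, ← exp_add,
        mul_comm, ← sub_eq_add_neg, ← mul_sub]

lemma freq_not_approxLE_freq_le (A : Finset α) (P : α → Prop) [DecidablePred P]
    {ε : ℝ} (hε : 0 ≤ ε) :
    freq (Fintype.piFinset fun _ : ι => A)
      (fun a => ¬ ApproxLE ε (freq A P) (freq univ fun i => P (a i))) ≤
        exp (-(ε ^ 2 * Fintype.card ι) / 2) := by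
  set p := freq A P with hp
  rcases (freq_nonneg A P).eq_or_lt with h0 | h0
  · rw [freq_eq_zero]
    · positivity
    · intro a _
      simp [ApproxLE, hp, ← h0, freq_nonneg]
  obtain ⟨x, hx0, hxp⟩ : ∃ x, 0 ≤ x ∧ x * √p = ε :=
    ⟨ε / √p, by positivity, div_mul_cancel₀ _ (sqrt_pos.2 h0).ne'⟩
  refine (freq_mono fun a _ ha => ?_).trans
    ((freq_chernoff A P (-x) (-x * (p - ε * √p))).trans (exp_le_exp.2 ?_))
  · exact mul_le_mul_of_nonpos_left (not_le.1 ha).le (neg_nonpos.2 hx0)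
  · have hxp2 : x ^ 2 * p = ε ^ 2 := by rw [← hxp, mul_pow, sq_sqrt h0.le]
    have hxpε : x * (ε * √p) = ε ^ 2 := by rw [← hxp]; ring
    have hexp := mul_le_mul_of_nonneg_left (exp_neg_le_one_sub_add hx0) h0.le
    have : p * (exp (-x) - 1) - -x * (p - ε * √p) ≤ -(ε ^ 2 / 2) := by linarith
    have := mul_le_mul_of_nonneg_left this (Fintype.card ι).cast_nonneg (α := ℝ)
    linarith

lemma freq_not_freq_approxLE_le (A : Finset α) (P : α → Prop) [DecidablePred P]
    {ε : ℝ} (hε : 0 < ε) :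
    freq (Fintype.piFinset fun _ : ι => A)
      (fun a => ¬ ApproxLE ε (freq univ fun i => P (a i)) (freq A P)) ≤
        exp (-(ε ^ 2 * Fintype.card ι) / 2) := by
  set p := freq A P
  have hp : 0 ≤ p := freq_nonneg A P
  -- `r ^ 2` is the threshold above which the empirical frequency `q` violates `q - ε √q ≤ p`.
  obtain ⟨r, hεr, hr⟩ : ∃ r, ε ≤ r ∧ r ^ 2 = p + ε * r := by
    refine ⟨(ε + √(ε ^ 2 + 4 * p)) / 2, ?_, ?_⟩
    · have := le_sqrt_of_sq_le (show ε ^ 2 ≤ ε ^ 2 + 4 * p by linarith)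
      linarith
    · linear_combination sq_sqrt (show 0 ≤ ε ^ 2 + 4 * p by positivity) / 4
  have hr0 : 0 < r := hε.trans_le hεr
  obtain ⟨x, hx0, hx1, rfl⟩ : ∃ x, 0 ≤ x ∧ x ≤ 1 ∧ ε = x * r :=
    ⟨ε / r, by positivity, (div_le_one hr0).2 hεr, (div_mul_cancel₀ _ hr0.ne').symm⟩
  refine (freq_mono fun a _ ha => ?_).trans
    ((freq_chernoff A P x (x * r ^ 2)).trans (exp_le_exp.2 ?_))
  · set q := freq univ fun i => P (a i)
    have hq := mul_self_sqrt (freq_nonneg univ fun i => P (a i))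
    refine mul_le_mul_of_nonneg_left ?_ hx0
    have : r ≤ √q := by
      by_contra! hlt
      refine ha ?_
      unfold ApproxLE
      nlinarith [sqrt_nonneg q]
    nlinarith
  · have hp' : p = r ^ 2 * (1 - x) := by linear_combination -hr
    have hexp := mul_le_mul_of_nonneg_left (exp_mul_one_sub_le hx0 hx1) (sq_nonneg r)
    have : p * (exp x - 1) - x * r ^ 2 ≤ -((x * r) ^ 2 / 2) := by rw [hp']; linarith
    have := mul_le_mul_of_nonneg_left this (Fintype.card ι).cast_nonneg (α := ℝ)
    linarith

lemma freq_not_approxLE_and_approxLE_le (A : Finset α) (P : α → Prop) [DecidablePred P]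
    {ε : ℝ} (hε : 0 < ε) :
    freq (Fintype.piFinset fun _ : ι => A)
      (fun a => ¬ (ApproxLE ε (freq A P) (freq univ fun i => P (a i)) ∧
        ApproxLE ε (freq univ fun i => P (a i)) (freq A P))) ≤
        2 * exp (-(ε ^ 2 * Fintype.card ι) / 2) := by
  simp only [not_and_or]
  refine (freq_or_le _ _ _).trans ?_
  rw [two_mul]
  exact add_le_add (freq_not_approxLE_freq_le A P hε.le) (freq_not_freq_approxLE_le A P hε)

end Chernoff

section Translates

variable {G : Type*} [AddCommGroup G] [Fintype G] [DecidableEq G]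

lemma card_filter_add_mem (T : Finset G) (u : G) : #{y | y + u ∈ T} = #T :=
  card_equiv (Equiv.addRight u) fun _ => mem_filter_univ _

lemma exists_card_mul_card_le_card_mul_card_filter {κ : Type*} [Fintype κ]
    (f : κ → G) (T : Finset G) :
    ∃ b, #T * Fintype.card κ ≤ Fintype.card G * #{x | b + f x ∈ T} := by
  by_contra! hlt
  have hcount : ∑ b, #{x | b + f x ∈ T} = #T * Fintype.card κ := by
    simp only [card_filter]
    rw [sum_comm]
    simp only [← card_filter, card_filter_add_mem, sum_const, card_univ, smul_eq_mul, mul_comm]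
  have := sum_lt_sum_of_nonempty univ_nonempty fun b _ => hlt b
  rw [← mul_sum, hcount, sum_const, card_univ, smul_eq_mul] at this
  exact this.false

end Translates

section DropSet

variable {G : Type*} [AddCommGroup G] [Fintype G]

/-- The points `y` at which the translate `f (y + u)` drops below `f y` by more than the scale
`c √(f y)`. -/
noncomputable def dropSet (f : G → ℝ) (c : ℝ) (u : G) : Finset G :=
  {y | ¬ ApproxLE c (f y) (f (y + u))}

lemma mem_dropSet {f : G → ℝ} {c : ℝ} {u y : G} :
    y ∈ dropSet f c u ↔ ¬ ApproxLE c (f y) (f (y + u)) :=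
  mem_filter_univ y

lemma card_dropSet_add_le {f : G → ℝ} (hf : ∀ y, 0 ≤ f y) {c c' : ℝ} (hc : 0 ≤ c) (hc' : 0 ≤ c')
    (u u' : G) :
    #(dropSet f (c + c') (u + u')) ≤ #(dropSet f c u) + #(dropSet f c' u') := by
  have hsub : dropSet f (c + c') (u + u') ⊆
      dropSet f c u ∪ ({y | y + u ∈ dropSet f c' u'} : Finset G) := by
    intro y hy
    contrapose! hy
    simp only [mem_union, mem_dropSet, mem_filter_univ, not_or, not_not, add_assoc] at hy ⊢
    exact hy.1.trans hc hc' (hf _) (hf _) hy.2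
  refine (card_le_card hsub).trans ((card_union_le _ _).trans_eq ?_)
  rw [card_filter_add_mem]

lemma card_dropSet_sum_le {ι : Type*} {f : G → ℝ} (hf : ∀ y, 0 ≤ f y) {c M : ℝ} (hc : 0 ≤ c)
    (s : Finset ι) (u : ι → G) (hu : ∀ i ∈ s, #(dropSet f c (u i)) ≤ M) :
    #(dropSet f (#s * c) (∑ i ∈ s, u i)) ≤ #s * M := by
  induction s using Finset.cons_induction with
  | empty => simp [dropSet, ApproxLE]
  | cons i s hi ih =>
    rw [sum_cons, card_cons, Nat.cast_succ, add_one_mul, add_one_mul, add_comm (_ * c),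
      add_comm (_ * M)]
    have hadd : (#(dropSet f (c + #s * c) (u i + ∑ j ∈ s, u j)) : ℝ) ≤
        #(dropSet f c (u i)) + #(dropSet f (#s * c) (∑ j ∈ s, u j)) :=
      mod_cast card_dropSet_add_le hf hc (by positivity) _ _
    exact hadd.trans (add_le_add (hu i (mem_cons_self i s))
      (ih fun j hj => hu j (mem_cons_of_mem hj)))

end DropSet

section Containment

variable {ι G : Type*} [AddCommGroup G] [DecidableEq G]

/-- The measure of additive containment of the family `(a i)_{i ∈ s}` in `B`. The family `id` on a
set `A` gives `ρ_{A→B}`; a tuple of elements of `A` gives its empirical approximation. -/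
noncomputable def containment (s : Finset ι) (a : ι → G) (B : Finset G) (y : G) : ℝ :=
  freq s fun i => y + a i ∈ B

lemma containment_nonneg (s : Finset ι) (a : ι → G) (B : Finset G) (y : G) :
    0 ≤ containment s a B y :=
  freq_nonneg _ _

lemma containment_le_one (s : Finset ι) (a : ι → G) (B : Finset G) (y : G) :
    containment s a B y ≤ 1 :=
  freq_le_one _ _

lemma containment_add_const (s : Finset ι) (a : ι → G) (x : G) (B : Finset G) (y : G) :
    containment s (fun i => a i + x) B y = containment s a B (y + x) := by
  simp only [containment, add_right_comm y x, add_assoc y]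

lemma containment_eq_zero {s : Finset ι} {a : ι → G} {A B : Finset G} {y : G}
    (ha : ∀ i ∈ s, a i ∈ A) (hy : y ∉ B - A) : containment s a B y = 0 :=
  freq_eq_zero fun i hi hB => hy (mem_sub.2 ⟨_, hB, _, ha i hi, add_sub_cancel_right y (a i)⟩)

end Containment

section Sampling

variable {ι G : Type*} [Fintype ι] [AddCommGroup G] [Fintype G] [DecidableEq G]

/-- The points at which the sample `a` fails to approximate `ρ_{A→B}` from above or from below. -/
noncomputable def misSampled (A B : Finset G) (ε : ℝ) (a : ι → G) : Finset G :=
  {y | ¬ (ApproxLE ε (containment A id B y) (containment univ a B y) ∧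
    ApproxLE ε (containment univ a B y) (containment A id B y))}

lemma misSampled_subset {A : Finset G} (B : Finset G) (ε : ℝ) {a : ι → G} (ha : ∀ i, a i ∈ A) :
    misSampled A B ε a ⊆ B - A := by
  intro y hy
  by_contra hyBA
  rw [misSampled, mem_filter_univ, containment_eq_zero (a := id) (fun _ ha => ha) hyBA,
    containment_eq_zero (s := univ) (fun i _ => ha i) hyBA] at hy
  simp [ApproxLE] at hy

lemma card_pow_le_two_mul_card_filter_misSampled [DecidableEq ι] {A B : Finset G}
    (hA : A.Nonempty) (hB : B.Nonempty) {ε : ℝ} (hε : 0 < ε) :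
    (#A : ℝ) ^ Fintype.card ι ≤ 2 * #{a ∈ Fintype.piFinset fun _ : ι => A |
      (#(misSampled A B ε a) : ℝ) ≤ 4 * #(B - A) * exp (-(ε ^ 2 * Fintype.card ι) / 2)} := by
  set e := exp (-(ε ^ 2 * Fintype.card ι) / 2)
  set Ω := Fintype.piFinset fun _ : ι => A
  have hΩ : (#Ω : ℝ) = #A ^ Fintype.card ι := by
    rw [Fintype.card_piFinset, prod_const, card_univ, Nat.cast_pow]
  have hrare (y : G) (_ : y ∈ B - A) : (#{a ∈ Ω | y ∈ misSampled A B ε a} : ℝ) ≤ #Ω * (2 * e) := by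
    rw [← card_mul_freq]
    gcongr
    simp only [misSampled, mem_filter_univ]
    exact freq_not_approxLE_and_approxLE_le A (fun b => y + b ∈ B) hε
  have hbad := card_filter_lt_freq_mul_le (hB.sub hA) Ω _ (4 * e) hrare
  have hgood {a : ι → G} (ha : a ∈ Ω) :
      4 * e < freq (B - A) (fun y => y ∈ misSampled A B ε a) ↔
        ¬ (#(misSampled A B ε a) : ℝ) ≤ 4 * #(B - A) * e := by
    have hsub := misSampled_subset B ε (Fintype.mem_piFinset.1 ha)
    rw [not_le, freq, filter_mem_eq_inter, inter_eq_right.2 hsub,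
      lt_div_iff₀ (mod_cast (hB.sub hA).card_pos), mul_right_comm]
  rw [filter_congr fun a ha => hgood ha] at hbad
  have hsplit := card_filter_add_card_filter_not (s := Ω)
    fun a => (#(misSampled A B ε a) : ℝ) ≤ 4 * #(B - A) * e
  have hsplit' := congrArg (Nat.cast (R := ℝ)) hsplit
  rw [Nat.cast_add] at hsplit'
  have : (#{a ∈ Ω | ¬ (#(misSampled A B ε a) : ℝ) ≤ 4 * #(B - A) * e} : ℝ) * 4 ≤ #Ω * 2 :=
    le_of_mul_le_mul_right (by linarith) (exp_pos _ : 0 < e)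
  linarith

lemma card_dropSet_containment_le (A B : Finset G) {ε M : ℝ} (hε : 0 ≤ ε) (b : ι → G) {x x' : G}
    (hx : #(misSampled A B ε fun i => b i + x) ≤ M)
    (hx' : #(misSampled A B ε fun i => b i + x') ≤ M) :
    #(dropSet (containment A id B) (2 * ε) (x - x')) ≤ 2 * M := by
  have hsub : dropSet (containment A id B) (2 * ε) (x - x') ⊆
      misSampled A B ε (fun i => b i + x) ∪
        ({y | y + (x - x') ∈ misSampled A B ε fun i => b i + x'} : Finset G) := by
    intro y hy
    contrapose! hy
    simp only [mem_union, misSampled, mem_filter_univ, containment_add_const, not_or,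
      not_not] at hy
    have hyx : y + (x - x') + x' = y + x := by abel
    rw [mem_dropSet, not_not, two_mul]
    exact hy.1.1.trans hε hε (containment_nonneg _ _ _ _) (containment_nonneg _ _ _ _)
      (hyx ▸ hy.2.2)
  have := (card_le_card hsub).trans (card_union_le _ _)
  rw [card_filter_add_mem] at this
  have : (#(dropSet (containment A id B) (2 * ε) (x - x')) : ℝ) ≤ _ := Nat.cast_le.2 this
  rw [Nat.cast_add] at this
  linarith

theorem exists_forall_card_dropSet_containment_le {A B : Finset G} {α : ℝ} (hα : 0 < α)
    (hA : α * Fintype.card G ≤ #A) (hB : B.Nonempty) {ε : ℝ} (hε : 0 < ε) (t : ℕ) :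
    ∃ X : Finset G, α ^ t / 2 * Fintype.card G ≤ #X ∧ ∀ x ∈ X, ∀ x' ∈ X,
      #(dropSet (containment A id B) (2 * ε) (x - x')) ≤
        8 * #(B - A) * exp (-(ε ^ 2 * t) / 2) := by
  have hG : (0 : ℝ) < Fintype.card G := mod_cast Fintype.card_pos
  have hA₀ : A.Nonempty := card_pos.1 (mod_cast (mul_pos hα hG).trans_le hA)
  set T := {a ∈ Fintype.piFinset fun _ : Fin t => A |
      (#(misSampled A B ε a) : ℝ) ≤ 4 * #(B - A) * exp (-(ε ^ 2 * t) / 2)} with hT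
  have hTcard : (#A : ℝ) ^ t ≤ 2 * #T := by
    have := card_pow_le_two_mul_card_filter_misSampled (ι := Fin t) hA₀ hB hε
    rwa [Fintype.card_fin] at this
  obtain ⟨b, hb⟩ := exists_card_mul_card_le_card_mul_card_filter
    (fun (x : G) (_ : Fin t) => x) T
  refine ⟨({x | (b + fun _ => x) ∈ T} : Finset G), ?_, fun x hx x' hx' => ?_⟩
  · rw [Fintype.card_fun, Fintype.card_fin] at hb
    have hb' : (#T : ℝ) * Fintype.card G ≤
      (Fintype.card G : ℝ) ^ t * #{x : G | (b + fun _ => x) ∈ T} := mod_cast hb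
    have hpow : α ^ t * (Fintype.card G : ℝ) ^ t ≤ 2 * #T := by
      rw [← mul_pow]
      exact (pow_le_pow_left₀ (by positivity) hA t).trans hTcard
    refine le_of_mul_le_mul_left ?_ (pow_pos hG t)
    nlinarith [mul_le_mul_of_nonneg_right hpow hG.le]
  · rw [mem_filter_univ, hT, mem_filter] at hx hx'
    have := card_dropSet_containment_le A B hε.le b hx.2 hx'.2
    linarith

end Sampling

section Walks

variable {G : Type*}

/-- The `ℓ`-tuples of pairs of elements of `X`, each pair encoding the step given by its
difference. -/
noncomputable def walks (X : Finset G) (ℓ : ℕ) : Finset (Fin ℓ → G × G) :=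
  Fintype.piFinset fun _ => X ×ˢ X

/-- The sum of the steps of a walk. -/
def displacement [AddCommGroup G] {ℓ : ℕ} (w : Fin ℓ → G × G) : G := ∑ i, ((w i).1 - (w i).2)

lemma mem_walks {X : Finset G} {ℓ : ℕ} {w : Fin ℓ → G × G} :
    w ∈ walks X ℓ ↔ ∀ i, (w i).1 ∈ X ∧ (w i).2 ∈ X := by
  simp only [walks, Fintype.mem_piFinset, mem_product]

lemma walks_nonempty {X : Finset G} (hX : X.Nonempty) (ℓ : ℕ) : (walks X ℓ).Nonempty :=
  Fintype.piFinset_nonempty.2 fun _ => hX.product hX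

variable [AddCommGroup G] [Fintype G]

lemma card_dropSet_displacement_le {X : Finset G} {f : G → ℝ} (hf : ∀ y, 0 ≤ f y) {c M : ℝ}
    (hc : 0 ≤ c) (hdrop : ∀ x ∈ X, ∀ x' ∈ X, #(dropSet f c (x - x')) ≤ M) {ℓ : ℕ}
    {w : Fin ℓ → G × G} (hw : w ∈ walks X ℓ) : #(dropSet f (ℓ * c) (displacement w)) ≤ ℓ * M := by
  rw [mem_walks] at hw
  have := card_dropSet_sum_le hf hc univ _ fun i _ => hdrop _ (hw i).1 _ (hw i).2
  rwa [card_univ, Fintype.card_fin] at this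

lemma card_dropSet_neg_displacement_le {X : Finset G} {f : G → ℝ} (hf : ∀ y, 0 ≤ f y) {c M : ℝ}
    (hc : 0 ≤ c) (hdrop : ∀ x ∈ X, ∀ x' ∈ X, #(dropSet f c (x - x')) ≤ M) {ℓ : ℕ}
    {w : Fin ℓ → G × G} (hw : w ∈ walks X ℓ) :
    #(dropSet f (ℓ * c) (-displacement w)) ≤ ℓ * M := by
  have hswap : displacement (fun i => (w i).swap) = -displacement w := by
    simp only [displacement, Prod.fst_swap, Prod.snd_swap, ← sum_neg_distrib, neg_sub]
  rw [← hswap]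
  exact card_dropSet_displacement_le hf hc hdrop
    (mem_walks.2 fun i => (mem_walks.1 hw i).symm)

lemma card_filter_lt_sub_mul_le_of_expect_sub_expect_le {X : Finset G} (hX : X.Nonempty)
    {f : G → ℝ} (hf0 : ∀ y, 0 ≤ f y) (hf1 : ∀ y, f y ≤ 1) {c M : ℝ} (hc : 0 ≤ c)
    (hdrop : ∀ x ∈ X, ∀ x' ∈ X, #(dropSet f c (x - x')) ≤ M) {ℓ : ℕ} {v : G} {τ : ℝ} (hτ : 0 ≤ τ)
    (hv : ∀ y, 𝔼 w ∈ walks X ℓ, f (y + displacement w) -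
      𝔼 w ∈ walks X ℓ, f (y + v + displacement w) ≤ τ) {η : ℝ}
    (hη : 0 ≤ η) :
    #{y | 2 * (ℓ * c) * √(f y) + 2 * η + τ < f y - f (y + v)} * η ≤ 2 * (ℓ * M) := by
  set W := walks X ℓ
  have hout (w) (hw : w ∈ W) : (#{y | y ∈ dropSet f (ℓ * c) (displacement w)} : ℝ) ≤ ℓ * M := by
    rw [filter_univ_mem]
    exact card_dropSet_displacement_le hf0 hc hdrop hw
  have hback (w) (hw : w ∈ W) :
      (#{y | y + (v + displacement w) ∈ dropSet f (ℓ * c) (-displacement w)} : ℝ) ≤ ℓ * M := by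
    rw [card_filter_add_mem]
    exact card_dropSet_neg_displacement_le hf0 hc hdrop hw
  have hout' := card_filter_lt_freq_mul_le (walks_nonempty hX ℓ) univ _ η hout
  have hback' := card_filter_lt_freq_mul_le (walks_nonempty hX ℓ) univ _ η hback
  have hsub : ({y | 2 * (ℓ * c) * √(f y) + 2 * η + τ < f y - f (y + v)} : Finset G) ⊆
      ({y | η < freq W fun w => y ∈ dropSet f (ℓ * c) (displacement w)} : Finset G) ∪
      ({y | η < freq W fun w =>
        y + (v + displacement w) ∈ dropSet f (ℓ * c) (-displacement w)} : Finset G) := by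
    intro y hy
    contrapose! hy
    simp only [mem_union, mem_filter_univ, not_or, not_lt, mem_dropSet, ← add_assoc,
      add_neg_cancel_right] at hy ⊢
    exact sub_le_of_expect_sub_expect_le (walks_nonempty hX ℓ) (fun _ _ => hf0 _) (fun _ _ => hf0 _)
      (fun _ _ => hf1 _) (hf0 y) (hf1 y) (hf0 _) (by positivity) hτ hy.1 hy.2 (hv y)
  have hcard := (card_le_card hsub).trans (card_union_le _ _)
  have := mul_le_mul_of_nonneg_right (Nat.cast_le (α := ℝ).2 hcard) hη
  rw [Nat.cast_add, add_mul] at this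
  linarith

end Walks

lemma addChar_sum_eq_prod {ι A M : Type*} [AddCommMonoid A] [CommMonoid M] (ψ : AddChar A M)
    (s : Finset ι) (f : ι → A) : ψ (∑ i ∈ s, f i) = ∏ i ∈ s, ψ (f i) :=
  map_prod ψ.toMonoidHom (fun i => Multiplicative.ofAdd (f i)) s

section Walsh

open Module

variable {V : Type*} [AddCommGroup V] [Module (ZMod 2) V]

/-- The character `x ↦ (-1) ^ φ x` of an `F_2`-space; its frequency `φ` is a linear functional. -/
noncomputable def walsh (φ : Dual (ZMod 2) V) : AddChar V ℝ :=
  (AddChar.zmodChar 2 (neg_one_sq (R := ℝ))).compAddMonoidHom φ.toAddMonoidHom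

lemma walsh_apply (φ : Dual (ZMod 2) V) (x : V) : walsh φ x = (-1) ^ (φ x).val := rfl

lemma walsh_apply_eq_one_iff {φ : Dual (ZMod 2) V} {x : V} : walsh φ x = 1 ↔ φ x = 0 := by
  have h : ∀ a : ZMod 2, Even a.val ↔ a = 0 := by decide
  rw [walsh_apply, neg_one_pow_eq_one_iff_even (by norm_num), h]

lemma walsh_apply_eq_or (φ : Dual (ZMod 2) V) (x : V) : walsh φ x = 1 ∨ walsh φ x = -1 :=
  neg_one_pow_eq_or ℝ _

lemma abs_walsh_apply (φ : Dual (ZMod 2) V) (x : V) : |walsh φ x| = 1 := by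
  rcases walsh_apply_eq_or φ x with h | h <;> simp [h]

lemma walsh_eq_zero_iff {φ : Dual (ZMod 2) V} : walsh φ = 0 ↔ φ = 0 := by
  simp only [DFunLike.ext_iff, AddChar.zero_apply, walsh_apply_eq_one_iff, LinearMap.zero_apply]

lemma walsh_dual_eval (x : V) (φ : Dual (ZMod 2) V) :
    walsh (Dual.eval (ZMod 2) V x) φ = walsh φ x :=
  rfl

lemma prod_walsh (s : Finset (Dual (ZMod 2) V)) (x : V) :
    ∏ φ ∈ s, walsh φ x = walsh (∑ φ ∈ s, φ) x :=
  (addChar_sum_eq_prod (walsh (Dual.eval (ZMod 2) V x)) s id).symm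

/-- The Fourier transform of the indicator function of `X` at the frequency `φ`, unnormalized. -/
noncomputable def walshSum (X : Finset V) (φ : Dual (ZMod 2) V) : ℝ := ∑ x ∈ X, walsh φ x

lemma expect_walsh_displacement (X : Finset V) (ℓ : ℕ) (φ : Dual (ZMod 2) V) :
    𝔼 w ∈ walks X ℓ, walsh φ (displacement w) = (walshSum X φ / #X) ^ (2 * ℓ) := by
  have hstep (w : Fin ℓ → V × V) :
      walsh φ (displacement w) = ∏ i, walsh φ (w i).1 * walsh φ (w i).2 := by
    simp only [displacement, addChar_sum_eq_prod, ZModModule.sub_eq_add,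
      AddChar.map_add_eq_mul]
  rw [expect_eq_sum_div_card, walks, sum_congr rfl fun w _ => hstep w,
    ← prod_univ_sum (fun _ => X ×ˢ X) fun _ p => walsh φ p.1 * walsh φ p.2, prod_const,
    Fintype.card_piFinset, prod_const, sum_product, ← sum_mul_sum, card_product, card_univ,
    Fintype.card_fin, pow_mul, div_pow, div_pow, Nat.cast_pow, Nat.cast_mul]
  simp only [walshSum, sq]

variable [Fintype V]

lemma sum_walsh (φ : Dual (ZMod 2) V) :
    ∑ x, walsh φ x = if φ = 0 then (Fintype.card V : ℝ) else 0 := by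
  rw [AddChar.sum_eq_ite]
  simp only [walsh_eq_zero_iff]

variable [Fintype (Dual (ZMod 2) V)]

lemma card_dual : Fintype.card (Dual (ZMod 2) V) = Fintype.card V := by
  rw [card_eq_pow_finrank (K := ZMod 2), card_eq_pow_finrank (K := ZMod 2) (V := V),
    Subspace.dual_finrank_eq]

lemma sum_walsh_apply [DecidableEq V] (x : V) :
    ∑ φ : Dual (ZMod 2) V, walsh φ x = if x = 0 then (Fintype.card V : ℝ) else 0 := by
  have := sum_walsh (Dual.eval (ZMod 2) V x)
  simpa only [walsh_dual_eval, card_dual, eval_apply_eq_zero_iff]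

lemma sum_walshSum_mul_walshSum_mul_walsh [DecidableEq V] (A B : Finset V) (y : V) :
    ∑ φ : Dual (ZMod 2) V, walshSum A φ * walshSum B φ * walsh φ y =
      Fintype.card V * #{a ∈ A | y + a ∈ B} := by
  have hzero (a b : V) : a + b + y = 0 ↔ y + a = b := by
    rw [← ZModModule.sub_eq_add a b, sub_add_eq_add_sub, sub_eq_zero, add_comm]
  calc
    _ = ∑ φ : Dual (ZMod 2) V, ∑ a ∈ A, ∑ b ∈ B, walsh φ (a + b + y) := by
      simp_rw [walshSum, sum_mul_sum, sum_mul, AddChar.map_add_eq_mul]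
    _ = ∑ a ∈ A, ∑ b ∈ B, if y + a = b then (Fintype.card V : ℝ) else 0 := by
      rw [sum_comm]
      simp only [sum_comm (s := univ), sum_walsh_apply, hzero]
    _ = Fintype.card V * #{a ∈ A | y + a ∈ B} := by
      simp only [sum_ite_eq, ← sum_filter, sum_const, nsmul_eq_mul, mul_comm]

lemma containment_eq_sum_walsh [DecidableEq V] (A B : Finset V) (y : V) :
    containment A id B y = (Fintype.card V * #A : ℝ)⁻¹ *
      ∑ φ : Dual (ZMod 2) V, walshSum A φ * walshSum B φ * walsh φ y := by
  have hV : (Fintype.card V : ℝ) ≠ 0 := mod_cast Fintype.card_ne_zero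
  rw [sum_walshSum_mul_walshSum_mul_walsh, mul_inv, mul_mul_mul_comm, inv_mul_cancel₀ hV, one_mul,
    ← div_eq_inv_mul]
  rfl

lemma sum_sq_walshSum (A : Finset V) :
    ∑ φ : Dual (ZMod 2) V, walshSum A φ ^ 2 = Fintype.card V * #A := by
  classical
  have := sum_walshSum_mul_walshSum_mul_walsh A A 0
  simpa only [AddChar.map_zero_eq_one, mul_one, zero_add, filter_mem_eq_inter, inter_self, ← sq]

lemma sum_abs_walshSum_mul_walshSum_le (A B : Finset V) :
    ∑ φ : Dual (ZMod 2) V, |walshSum A φ * walshSum B φ| ≤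
      Fintype.card V * √(#A * #B) := by
  have := Real.sum_mul_le_sqrt_mul_sqrt univ (fun φ : Dual (ZMod 2) V => |walshSum A φ|)
    fun φ => |walshSum B φ|
  simp only [sq_abs, sum_sq_walshSum, ← abs_mul] at this
  refine this.trans_eq ?_
  rw [sqrt_mul (by positivity), sqrt_mul (by positivity), mul_mul_mul_comm,
    mul_self_sqrt (by positivity), sqrt_mul (by positivity)]

lemma expect_containment_add_displacement [DecidableEq V] (A B X : Finset V) (ℓ : ℕ) (y : V) :
    𝔼 w ∈ walks X ℓ, containment A id B (y + displacement w) = (Fintype.card V * #A : ℝ)⁻¹ *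
      ∑ φ : Dual (ZMod 2) V,
        walshSum A φ * walshSum B φ * walsh φ y * (walshSum X φ / #X) ^ (2 * ℓ) := by
  simp only [containment_eq_sum_walsh, AddChar.map_add_eq_mul, ← mul_expect, expect_sum_comm,
    ← mul_assoc, expect_walsh_displacement]

end Walsh

section LargeSpectrum

open Module

variable {V : Type*} [AddCommGroup V] [Module (ZMod 2) V]

/-- The frequencies `φ` at which the indicator function of `X` has bias
`|𝔼 x ∈ X, (-1) ^ φ x| ≥ δ`. -/
def largeSpectrum (X : Finset V) (δ : ℝ) : Set (Dual (ZMod 2) V) :=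
  {φ | δ * #X ≤ |walshSum X φ|}

lemma abs_walsh_mul_one_sub_walsh_mul_pow_le {X : Finset V} {δ : ℝ} (hδ : 0 ≤ δ)
    {φ : Dual (ZMod 2) V} {v : V} (hv : φ ∈ largeSpectrum X δ → φ v = 0) (ℓ : ℕ) (y : V) :
    |walsh φ y * (1 - walsh φ v) * (walshSum X φ / #X) ^ (2 * ℓ)| ≤ 2 * δ ^ (2 * ℓ) := by
  rcases le_or_gt (δ * #X) |walshSum X φ| with hlarge | hsmall
  · rw [walsh_apply_eq_one_iff.2 (hv hlarge), sub_self, mul_zero, zero_mul, abs_zero]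
    positivity
  · have hbias : |walshSum X φ / #X| ≤ δ := by
      rw [abs_div, Nat.abs_cast]
      exact div_le_of_le_mul₀ (Nat.cast_nonneg _) hδ hsmall.le
    have htwo : |1 - walsh φ v| ≤ 2 := by
      rcases walsh_apply_eq_or φ v with h | h <;> norm_num [h]
    rw [abs_mul, abs_mul, abs_walsh_apply, one_mul, abs_pow]
    gcongr

lemma expect_containment_sub_expect_containment_le [Finite V] [DecidableEq V]
    (A B : Finset V) {X : Finset V} {δ : ℝ} (hδ : 0 ≤ δ) {v : V}
    (hv : ∀ φ ∈ largeSpectrum X δ, φ v = 0) (ℓ : ℕ) (y : V) :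
    𝔼 w ∈ walks X ℓ, containment A id B (y + displacement w) -
      𝔼 w ∈ walks X ℓ, containment A id B (y + v + displacement w) ≤
        2 * δ ^ (2 * ℓ) * √(#B / #A) := by
  have := Fintype.ofFinite V
  have : Finite (Dual (ZMod 2) V) := Module.finite_of_finite (ZMod 2)
  have := Fintype.ofFinite (Dual (ZMod 2) V)
  have hV : (Fintype.card V : ℝ) ≠ 0 := mod_cast Fintype.card_ne_zero
  have hsqrt : √(#A * #B) / #A = √(#B / #A) := by
    rw [sqrt_mul (Nat.cast_nonneg _), mul_div_right_comm, sqrt_div_self, inv_mul_eq_div,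
      sqrt_div (Nat.cast_nonneg _)]
  rw [expect_containment_add_displacement, expect_containment_add_displacement, ← mul_sub,
    ← sum_sub_distrib]
  calc
    _ ≤ (Fintype.card V * #A : ℝ)⁻¹ *
        ∑ φ : Dual (ZMod 2) V, |walshSum A φ * walshSum B φ| * (2 * δ ^ (2 * ℓ)) := by
      gcongr with φ
      calc
        _ = walshSum A φ * walshSum B φ *
            (walsh φ y * (1 - walsh φ v) * (walshSum X φ / #X) ^ (2 * ℓ)) := by
          rw [AddChar.map_add_eq_mul]
          ring
        _ ≤ |walshSum A φ * walshSum B φ| *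
            |walsh φ y * (1 - walsh φ v) * (walshSum X φ / #X) ^ (2 * ℓ)| := by
          rw [← abs_mul]
          exact le_abs_self _
        _ ≤ |walshSum A φ * walshSum B φ| * (2 * δ ^ (2 * ℓ)) := by
          gcongr
          exact abs_walsh_mul_one_sub_walsh_mul_pow_le hδ (hv φ) ℓ y
    _ ≤ (Fintype.card V * #A : ℝ)⁻¹ * (Fintype.card V * √(#A * #B) * (2 * δ ^ (2 * ℓ))) := by
      rw [← sum_mul]
      gcongr
      exact sum_abs_walshSum_mul_walshSum_le A B
    _ = 2 * δ ^ (2 * ℓ) * √(#B / #A) := by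
      rw [← hsqrt]
      field_simp

end LargeSpectrum

section Chang

open Module

variable {V : Type*} [AddCommGroup V] [Module (ZMod 2) V]

lemma sum_prod_add_mul_walsh [Fintype V] {b : Finset (Dual (ZMod 2) V)}
    (hb : LinearIndepOn (ZMod 2) id (b : Set (Dual (ZMod 2) V))) (p q : Dual (ZMod 2) V → ℝ) :
    ∑ x, ∏ φ ∈ b, (p φ + q φ * walsh φ x) = Fintype.card V * ∏ φ ∈ b, p φ := by
  have hindep {s : Finset (Dual (ZMod 2) V)} (hs : s ⊆ b) (h0 : ∑ φ ∈ s, φ = 0) : s = ∅ := by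
    have := linearIndepOn_finset_iff.1 (hb.mono (coe_subset.2 hs)) 1 (by simpa using h0)
    exact eq_empty_of_forall_notMem fun φ hφ => one_ne_zero (this φ hφ)
  calc
    _ = ∑ s ∈ b.powerset, (∏ φ ∈ s, q φ) * (∏ φ ∈ b \ s, p φ) * ∑ x, walsh (∑ φ ∈ s, φ) x := by
      simp only [add_comm (p _), prod_add, prod_mul_distrib, prod_walsh, mul_sum]
      rw [sum_comm]
      simp only [mul_right_comm]
    _ = (∏ φ ∈ ∅, q φ) * (∏ φ ∈ b \ ∅, p φ) * ∑ x : V, walsh (∑ φ ∈ ∅, φ) x := by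
      refine sum_eq_single_of_mem ∅ (empty_mem_powerset b) fun s hs hne => ?_
      rw [sum_walsh, if_neg (mt (hindep (mem_powerset.1 hs)) hne), mul_zero]
    _ = Fintype.card V * ∏ φ ∈ b, p φ := by
      rw [sum_walsh, sum_empty, if_pos rfl, prod_empty, sdiff_empty, one_mul, mul_comm]

lemma exp_mul_walsh (r : ℝ) (φ : Dual (ZMod 2) V) (x : V) :
    exp (r * walsh φ x) = cosh r + sinh r * walsh φ x := by
  rcases walsh_apply_eq_or φ x with h | h
  · rw [h, mul_one, mul_one, cosh_add_sinh]
  · rw [h, mul_neg_one, mul_neg_one, ← sub_eq_add_neg, cosh_sub_sinh]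

lemma sum_exp_sum_walsh_le [Fintype V] {b : Finset (Dual (ZMod 2) V)}
    (hb : LinearIndepOn (ZMod 2) id (b : Set (Dual (ZMod 2) V))) (r : Dual (ZMod 2) V → ℝ) :
    ∑ x, exp (∑ φ ∈ b, r φ * walsh φ x) ≤ Fintype.card V * exp (∑ φ ∈ b, r φ ^ 2 / 2) := by
  simp only [exp_sum, exp_mul_walsh, sum_prod_add_mul_walsh hb]
  gcongr with φ
  exact cosh_le_exp_half_sq _

lemma exp_expect_le {ι : Type*} {s : Finset ι} (hs : s.Nonempty) (f : ι → ℝ) :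
    exp (𝔼 i ∈ s, f i) ≤ 𝔼 i ∈ s, exp (f i) := by
  have hsum : ∑ _i ∈ s, (#s : ℝ)⁻¹ = 1 := by
    rw [sum_const, nsmul_eq_mul, mul_inv_cancel₀ (mod_cast hs.card_ne_zero)]
  have := convexOn_exp.map_sum_le (p := f) (fun _ _ => by positivity) hsum fun _ _ => Set.mem_univ _
  simpa only [expect_eq_sum_div_card, div_eq_inv_mul, mul_sum, smul_eq_mul] using this

/-- The exponents used to test the bias of `X` at `φ`: their signs are those of the biases, so that
`∑ φ, alignedWeight X δ φ * walsh φ` has a large mean on `X`. -/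
noncomputable def alignedWeight (X : Finset V) (δ : ℝ) (φ : Dual (ZMod 2) V) : ℝ :=
  δ * SignType.sign (walshSum X φ)

lemma sq_alignedWeight_le (X : Finset V) (δ : ℝ) (φ : Dual (ZMod 2) V) :
    alignedWeight X δ φ ^ 2 ≤ δ ^ 2 := by
  have hsign (s : SignType) : (s : ℝ) ^ 2 ≤ 1 := by cases s <;> simp
  rw [alignedWeight, mul_pow]
  exact mul_le_of_le_one_right (sq_nonneg δ) (hsign _)

lemma sq_mul_card_le_expect_sum_alignedWeight {X : Finset V} (hX : X.Nonempty) {δ : ℝ}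
    (hδ : 0 ≤ δ) {b : Finset (Dual (ZMod 2) V)} (hb : ↑b ⊆ largeSpectrum X δ) :
    δ ^ 2 * #b ≤ 𝔼 x ∈ X, ∑ φ ∈ b, alignedWeight X δ φ * walsh φ x := by
  rw [expect_sum_comm, mul_comm, ← nsmul_eq_mul]
  refine card_nsmul_le_sum _ _ _ fun φ hφ => ?_
  rw [← mul_expect, expect_eq_sum_div_card, ← walshSum, alignedWeight, mul_assoc, mul_div_assoc',
    sign_mul_self, sq]
  gcongr
  exact (le_div_iff₀ (mod_cast hX.card_pos)).2 (hb hφ)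

theorem sq_mul_card_le_two_mul_log [Fintype V] {X : Finset V} (hX : X.Nonempty) {δ : ℝ}
    (hδ : 0 ≤ δ) {b : Finset (Dual (ZMod 2) V)} (hb : ↑b ⊆ largeSpectrum X δ)
    (hindep : LinearIndepOn (ZMod 2) id (b : Set (Dual (ZMod 2) V))) :
    δ ^ 2 * #b ≤ 2 * log (Fintype.card V / #X) := by
  set r := alignedWeight X δ
  have hX0 : (0 : ℝ) < #X := mod_cast hX.card_pos
  have : (0 : ℝ) < Fintype.card V := hX0.trans_le (mod_cast card_le_univ X)
  have hvar : ∑ φ ∈ b, r φ ^ 2 / 2 ≤ δ ^ 2 * #b / 2 := by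
    rw [← sum_div, mul_comm, ← nsmul_eq_mul]
    gcongr
    exact sum_le_card_nsmul _ _ _ fun φ _ => sq_alignedWeight_le X δ φ
  have hexp : exp (δ ^ 2 * #b) ≤ Fintype.card V / #X * exp (δ ^ 2 * #b / 2) :=
    calc
      exp (δ ^ 2 * #b) ≤ exp (𝔼 x ∈ X, ∑ φ ∈ b, r φ * walsh φ x) :=
        exp_le_exp.2 (sq_mul_card_le_expect_sum_alignedWeight hX hδ hb)
      _ ≤ 𝔼 x ∈ X, exp (∑ φ ∈ b, r φ * walsh φ x) := exp_expect_le hX _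
      _ ≤ (∑ x, exp (∑ φ ∈ b, r φ * walsh φ x)) / #X := by
        rw [expect_eq_sum_div_card]
        gcongr
        exact subset_univ X
      _ ≤ Fintype.card V * exp (∑ φ ∈ b, r φ ^ 2 / 2) / #X := by
        gcongr
        exact sum_exp_sum_walsh_le hindep r
      _ ≤ Fintype.card V / #X * exp (δ ^ 2 * #b / 2) := by
        rw [mul_div_right_comm]
        gcongr
  have := log_le_log (exp_pos _) hexp
  rw [log_mul (by positivity) (exp_pos _).ne', log_exp, log_exp] at this
  linarith

theorem sq_mul_finrank_span_largeSpectrum_le [Fintype V] {X : Finset V} (hX : X.Nonempty) {δ : ℝ}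
    (hδ : 0 ≤ δ) :
    δ ^ 2 * finrank (ZMod 2) (Submodule.span (ZMod 2) (largeSpectrum X δ)) ≤
      2 * log (Fintype.card V / #X) := by
  have : Finite (Dual (ZMod 2) V) := Module.finite_of_finite (ZMod 2)
  obtain ⟨b, hb, hspan, hindep⟩ := exists_linearIndependent (ZMod 2) (largeSpectrum X δ)
  lift b to Finset (Dual (ZMod 2) V) using b.toFinite
  rw [← hspan, finrank_span_finset_eq_card hindep]
  exact sq_mul_card_le_two_mul_log hX hδ hb hindep

end Chang

section AlmostPeriodicity

open Module

lemma one_sub_card_div_card_le_freq {ι : Type*} [Fintype ι] {S : Finset ι} (hS : S.Nonempty)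
    (P : ι → Prop) [DecidablePred P] : 1 - (#{i | ¬ P i} : ℝ) / #S ≤ freq S P := by
  have hS0 : (0 : ℝ) < #S := mod_cast hS.card_pos
  have hsplit : #S ≤ #{i ∈ S | P i} + #{i | ¬ P i} := by
    rw [← card_filter_add_card_filter_not (s := S) P]
    gcongr
    exact subset_univ S
  rw [sub_le_iff_le_add, freq, ← add_div, one_le_div hS0]
  exact_mod_cast hsplit

lemma log_le_logb_two {x : ℝ} (hx : 1 ≤ x) : log x ≤ logb 2 x :=
  le_div_self (log_nonneg hx) (log_pos one_lt_two) (log_two_lt_d9.le.trans (by norm_num))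

lemma two_mul_half_pow_le {ℓ : ℕ} (hℓ : 0 < ℓ) :
    2 * (1 / 2 : ℝ) ^ (2 * ℓ) ≤ 2 ^ (-(ℓ : ℤ)) := by
  have hhalf : 2 * (1 / 2 : ℝ) ^ ℓ ≤ 1 := by
    linarith [pow_le_of_le_one (a := (1 / 2 : ℝ)) (by norm_num) (by norm_num) hℓ.ne']
  rw [zpow_neg, zpow_natCast, ← inv_pow, ← one_div, two_mul ℓ, pow_add, ← mul_assoc]
  exact mul_le_of_le_one_left (by positivity) hhalf

variable {V : Type*} [AddCommGroup V] [Module (ZMod 2) V] [Fintype V]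

lemma sq_mul_finrank_sub_finrank_dualCoannihilator_largeSpectrum_le {X : Finset V}
    (hX : X.Nonempty) {δ : ℝ} (hδ : 0 ≤ δ) :
    δ ^ 2 * (finrank (ZMod 2) V - finrank (ZMod 2)
      (Submodule.span (ZMod 2) (largeSpectrum X δ)).dualCoannihilator) ≤
        2 * log (Fintype.card V / #X) := by
  rw [← Subspace.finrank_add_finrank_dualCoannihilator_eq
    (Submodule.span (ZMod 2) (largeSpectrum X δ)), Nat.cast_add, add_sub_cancel_right]
  exact sq_mul_finrank_span_largeSpectrum_le hX hδ

variable [DecidableEq V]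

theorem exists_submodule_forall_card_filter_lt_containment_sub_mul_le {A B : Finset V} {α : ℝ}
    (hα : 0 < α) (hA : α * Fintype.card V ≤ #A) (hB : B.Nonempty) {ε : ℝ} (hε : 0 < ε) (t : ℕ) :
    ∃ W : Submodule (ZMod 2) V,
      (finrank (ZMod 2) V : ℝ) - finrank (ZMod 2) W ≤ 8 * log (2 / α ^ t) ∧
      ∀ v ∈ W, ∀ η : ℝ, 0 ≤ η → ∀ ℓ : ℕ, 0 < ℓ →
        #{y | 4 * ε * ℓ * √(containment A id B y) + 2 * η + 2 ^ (-(ℓ : ℤ)) * √(#B / #A) <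
          containment A id B y - containment A id B (y + v)} * η ≤
            16 * ℓ * #(A + B) * exp (-(ε ^ 2 * t) / 2) := by
  obtain ⟨X, hXcard, hXdrop⟩ := exists_forall_card_dropSet_containment_le hα hA hB hε t
  have : (0 : ℝ) < Fintype.card V := mod_cast Fintype.card_pos
  have hX0 : (0 : ℝ) < #X := (by positivity : 0 < α ^ t / 2 * Fintype.card V).trans_le hXcard
  have hX : X.Nonempty := card_pos.1 (mod_cast hX0)
  have hratio : Fintype.card V / #X ≤ 2 / α ^ t := by
    rw [div_le_div_iff₀ hX0 (by positivity)]
    linarith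
  have hcodim := sq_mul_finrank_sub_finrank_dualCoannihilator_largeSpectrum_le hX
    (δ := 1 / 2) (by norm_num)
  have hlog : log (Fintype.card V / #X) ≤ log (2 / α ^ t) := by gcongr
  refine ⟨(Submodule.span (ZMod 2) (largeSpectrum X (1 / 2))).dualCoannihilator, by linarith,
    fun v hv η hη ℓ hℓ => ?_⟩
  have hv' : ∀ φ ∈ largeSpectrum X (1 / 2), φ v = 0 := fun φ hφ =>
    (Submodule.mem_dualCoannihilator v).1 hv φ (Submodule.subset_span hφ)
  have hsmooth (y : V) := (expect_containment_sub_expect_containment_le A B (by norm_num) hv' ℓ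
    y).trans (mul_le_mul_of_nonneg_right (two_mul_half_pow_le hℓ) (sqrt_nonneg _))
  have hcard := card_filter_lt_sub_mul_le_of_expect_sub_expect_le hX (containment_nonneg A id B)
    (containment_le_one A id B) (by positivity) hXdrop (by positivity) hsmooth hη
  have hdiff : B - A = A + B := by
    rw [add_comm A]
    exact image₂_congr fun b _ a _ => ZModModule.sub_eq_add b a
  have hscale : 2 * (ℓ * (2 * ε)) = 4 * ε * ℓ := by ring
  rw [hscale, hdiff] at hcard
  linarith

theorem refined_almost_periodicity_over_subspace_general {A B : Finset V} {α : ℝ} (hα : 0 < α)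
    (hA : α * Fintype.card V ≤ #A) (hB : B.Nonempty) {ε : ℝ} (hε : 0 < ε) (t : ℕ) :
    ∃ W : Submodule (ZMod 2) V,
      (finrank (ZMod 2) V : ℝ) - finrank (ZMod 2) W ≤ 32 * logb 2 (2 / α ^ t) ∧
      ∀ v ∈ W, ∀ S : Finset V, S.Nonempty → ∀ η : ℝ, 0 < η → ∀ ℓ : ℕ, 0 < ℓ →
        1 - 16 * (ℓ / η) * (#(A + B) / #S) * exp (-(ε ^ 2 * t) / 4) ≤
          freq S fun y => containment A id B y - containment A id B (y + v) ≤
            4 * ε * ℓ * √(containment A id B y) + 2 * η + 2 ^ (-(ℓ : ℤ)) * √(#B / #A) := by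
  obtain ⟨W, hW, hper⟩ :=
    exists_submodule_forall_card_filter_lt_containment_sub_mul_le hα hA hB hε t
  have hα1 : α ≤ 1 := le_of_mul_le_mul_right
    (hA.trans (by rw [one_mul]; exact_mod_cast card_le_univ A)) (mod_cast Fintype.card_pos)
  have hratio : 1 ≤ 2 / α ^ t :=
    (one_le_div (by positivity)).2 ((pow_le_one₀ hα.le hα1).trans one_le_two)
  refine ⟨W, by linarith [log_le_logb_two hratio, log_nonneg hratio], fun v hv S hS η hη ℓ hℓ => ?_⟩
  have hexceptional := (le_div_iff₀ hη).2 (hper v hv η hη.le ℓ hℓ)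
  simp only [← not_le] at hexceptional
  have hexp : exp (-(ε ^ 2 * t) / 2) ≤ exp (-(ε ^ 2 * t) / 4) :=
    exp_le_exp.2 (by linarith [show 0 ≤ ε ^ 2 * t by positivity])
  refine le_trans ?_ (one_sub_card_div_card_le_freq hS _)
  calc
    1 - 16 * (ℓ / η) * (#(A + B) / #S) * exp (-(ε ^ 2 * t) / 4)
        ≤ 1 - 16 * (ℓ / η) * (#(A + B) / #S) * exp (-(ε ^ 2 * t) / 2) := by
      gcongr
    _ = 1 - 16 * ℓ * #(A + B) * exp (-(ε ^ 2 * t) / 2) / η / #S := by ring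
    _ ≤ _ := by gcongr

end AlmostPeriodicity

lemma rhoMeas_eq_containment {n : ℕ} (A B : Finset (Fin n → ZMod 2)) :
    rhoMeas A B = containment A id B :=
  rfl

lemma prOver_eq_freq {n : ℕ} (S : Finset (Fin n → ZMod 2)) (P : (Fin n → ZMod 2) → Prop)
    [DecidablePred P] : prOver S P = freq S P := by
  unfold prOver freq
  congr!

theorem refined_almost_periodicity_over_subspace {n : ℕ} (α : ℝ)
    (hα0 : 0 < α) (hα1 : α ≤ 1)
    (A : Finset (Fin n → ZMod 2)) (hA : α * 2 ^ n ≤ (A.card : ℝ))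
    (ε : ℝ) (hε : 0 < ε) (t : ℕ) (ht : 0 < t)
    (B : Finset (Fin n → ZMod 2)) (hB : B.Nonempty) :
    ∃ V : Submodule (ZMod 2) (Fin n → ZMod 2),
      (n : ℝ) - Module.finrank (ZMod 2) V ≤ 32 * Real.logb 2 (2 / α ^ t) ∧
      ∀ v ∈ V, ∀ S : Finset (Fin n → ZMod 2), S.Nonempty →
        ∀ η : ℝ, 0 < η → ∀ ℓ : ℕ, 0 < ℓ →
          1 - 16 * ((ℓ : ℝ) / η) * (((A + B).card : ℝ) / S.card) *
              Real.exp (-(ε ^ 2 * t) / 4) ≤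
            prOver S (fun y =>
              rhoMeas A B y - rhoMeas A B (y + v) ≤
                4 * ε * ℓ * Real.sqrt (rhoMeas A B y) + 2 * η +
                  (2 : ℝ) ^ (-(ℓ : ℤ)) * Real.sqrt ((B.card : ℝ) / A.card)) := by
  simpa only [prOver_eq_freq, rhoMeas_eq_containment, Module.finrank_fin_fun] using
    refined_almost_periodicity_over_subspace_general hα0 (by simpa using hA) hB hε t
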